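/- There exists an absolute constant c > 0 with the following property. Let m, N be positive integers and let G : ℕ → ℕ. For each positive integer τ and each index j ∈ {1,…,G(τ)}, let an architecture be given by fixed unitaries V^{τ,j}_0,…,V^{τ,j}_τ ∈ U(4m), with circuit map F_{τ,j} : U(4)^τ → U(4m), F_{τ,j}(U_1,…,U_τ) = V^{τ,j}_τ (U_τ ⊗ I_m) ⋯ V^{τ,j}_1 (U_1 ⊗ I_m) V^{τ,j}_0. Let Z be a measurable space with probability measure μ, ρ : Z → ℂ^{4m×4m} measurable with density-matrix values, C > 0, and O : Z → ℂ^{4m×4m} measurable with Hermitian values satisfying ‖O_z‖ ≤ C. Define ℓ_{τ,j}(θ; z) = Re Tr(O_z · F_{τ,j}(θ) · ρ(z) · F_{τ,j}(θ)*), R_{τ,j}(θ) = ∫ ℓ_{τ,j}(θ; z) dμ(z), and R̂_{S,τ,j}(θ) = (1/N) Σ_{i=1}^N ℓ_{τ,j}(θ; z_i) for S ∈ Z^N. Then for every δ ∈ (0,1), with probability at least 1 − δ over S ~ μ^{⊗N}, simultaneously for every positive integer τ, every j ∈ {1,…,G(τ)}, and every θ ∈ U(4)^τ: R_{τ,j}(θ)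 − R̂_{S,τ,j}(θ) ≤ c · C · ( √(τ(1 + log τ)/N) + √(log(G(τ))/N) + √(log(2/δ)/N) ). In particular, this uniform bound applies to the architecture and parameter setting selected data-dependently by any variable-structure optimization procedure. -/

import Mathlib

open MeasureTheory Matrix
open scoped Kronecker ComplexOrder

/-- The ℓ²→ℓ² operator norm (spectral norm) of a complex square matrix. -/
noncomputable def opNorm {n : Type*} [Fintype n] [DecidableEq n] (A : Matrix n n ℂ) : ℝ :=
  ‖Matrix.toEuclideanCLM (𝕜 := ℂ) A‖

/-- The variational unitary circuit: `circuit V U L = V L * (U (L-1) ⊗ I) * ⋯ * (U 0 ⊗ I) * V 0`,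
i.e. `L` layers of 2-qubit gates interleaved with fixed global unitaries on `ℂ^{4m}`. -/
noncomputable def circuit {m : ℕ} (V : ℕ → Matrix (Fin 4 × Fin m) (Fin 4 × Fin m) ℂ)
    (U : ℕ → Matrix (Fin 4) (Fin 4) ℂ) : ℕ → Matrix (Fin 4 × Fin m) (Fin 4 × Fin m) ℂ
  | 0 => V 0
  | (t + 1) => V (t + 1) * (U t ⊗ₖ (1 : Matrix (Fin m) (Fin m) ℂ)) * circuit V U t

/-- The loss `ℓ(θ; z) = Re Tr(O_z · F(θ) · ρ(z) · F(θ)*)`. -/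
noncomputable def qloss {m : ℕ} {Z : Type*}
    (V : ℕ → Matrix (Fin 4 × Fin m) (Fin 4 × Fin m) ℂ) (L : ℕ)
    (O ρ : Z → Matrix (Fin 4 × Fin m) (Fin 4 × Fin m) ℂ)
    (U : ℕ → Matrix (Fin 4) (Fin 4) ℂ) (z : Z) : ℝ :=
  ((O z * circuit V U L * ρ z * (circuit V U L)ᴴ).trace).re

/-!
In the Heisenberg picture, perturbing a circuit changes the evolved observable by at most twice the
norm of the observable times the change of the circuit, and the circuit itself changes by at most
the sum of the changes of its gates. Since the unitary group of `ℂ⁴` lies in the unit ball of a real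
space of dimension 32, a volume comparison covers the losses of one architecture with `τ` gates, up
to `C * 2⁻ᵏ` in the sup norm, by `exp (96 * τ * (1 + log τ) * k)` of them. Chaining along these
nets, with Hoeffding's inequality for every link, bounds the generalization gap of a single
architecture by a multiple of `C * √((τ * (1 + log τ) + u) / N)` outside an event of probability
`exp (-u)`. The choice `u = log (G τ) + log (2 / δ) + τ` makes these probabilities sum to at most
`δ` over all architectures, and its last summand is absorbed by `τ * (1 + log τ)`.
-/

section OperatorNorm

open scoped Matrix.Norms.L2Operator

lemma norm_trace_mul_le_of_posSemidef {𝕜 n : Type*} [RCLike 𝕜] [Fintype n] [DecidableEq n]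
    (A : Matrix n n 𝕜) {ρ : Matrix n n 𝕜} (hρ : ρ.PosSemidef) :
    ‖(A * ρ).trace‖ ≤ ‖A‖ * ‖ρ.trace‖ := by
  obtain ⟨k, v, rfl⟩ := Matrix.posSemidef_iff_eq_sum_vecMulVec.mp hρ
  let w : Fin k → EuclideanSpace 𝕜 n := fun i ↦ WithLp.toLp 2 (v i)
  have trace_mul_rankOne (B : Matrix n n 𝕜) (i : Fin k) :
      (B * vecMulVec (v i) (star (v i))).trace
        = inner 𝕜 (w i) (toEuclideanCLM (𝕜 := 𝕜) B (w i)) := by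
    rw [mul_vecMulVec, trace_vecMulVec]
    simp [w, EuclideanSpace.inner_toLp_toLp]
  have trace_eq : (∑ i, vecMulVec (v i) (star (v i))).trace = ((∑ i, ‖w i‖ ^ 2 : ℝ) : 𝕜) := by
    rw [trace_sum, RCLike.ofReal_sum]
    refine Finset.sum_congr rfl fun i _ ↦ ?_
    simpa [inner_self_eq_norm_sq_to_K] using trace_mul_rankOne 1 i
  have norm_inner_le (i : Fin k) :
      ‖inner 𝕜 (w i) (toEuclideanCLM (𝕜 := 𝕜) A (w i))‖ ≤ ‖A‖ * ‖w i‖ ^ 2 :=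
    calc _ ≤ ‖w i‖ * ‖toEuclideanCLM (𝕜 := 𝕜) A (w i)‖ := norm_inner_le_norm _ _
      _ ≤ ‖w i‖ * (‖A‖ * ‖w i‖) := by
        gcongr
        exact (toEuclideanCLM (𝕜 := 𝕜) A).le_opNorm (w i)
      _ = ‖A‖ * ‖w i‖ ^ 2 := by ring
  calc ‖(A * ∑ i, vecMulVec (v i) (star (v i))).trace‖
      ≤ ∑ i, ‖A‖ * ‖w i‖ ^ 2 := by
        rw [Matrix.mul_sum, trace_sum]
        exact norm_sum_le_of_le _ fun i _ ↦ trace_mul_rankOne A i ▸ norm_inner_le i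
    _ = ‖A‖ * ‖(∑ i, vecMulVec (v i) (star (v i))).trace‖ := by
        rw [trace_eq, RCLike.norm_ofReal, abs_of_nonneg (by positivity), Finset.mul_sum]

/-- The embedding `A ↦ A ⊗ I` of the operators on one tensor factor, as a ⋆-homomorphism. -/
def kroneckerOneStarAlgHom (k n : Type*) [Fintype k] [DecidableEq k] [Fintype n] [DecidableEq n] :
    Matrix k k ℂ →⋆ₐ[ℂ] Matrix (k × n) (k × n) ℂ where
  toFun A := A ⊗ₖ 1
  map_one' := one_kronecker_one
  map_mul' A B := by rw [← mul_kronecker_mul, mul_one]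
  map_zero' := zero_kronecker _
  map_add' A B := add_kronecker _ _ _
  commutes' c := by simp [Algebra.algebraMap_eq_smul_one, smul_kronecker]
  map_star' A := by simp [star_eq_conjTranspose, conjTranspose_kronecker]

lemma norm_kronecker_one_le {k n : Type*} [Fintype k] [DecidableEq k] [Fintype n] [DecidableEq n]
    (A : Matrix k k ℂ) : ‖A ⊗ₖ (1 : Matrix n n ℂ)‖ ≤ ‖A‖ :=
  NonUnitalStarAlgHom.norm_apply_le (kroneckerOneStarAlgHom k n) A

lemma norm_star_mul_mul_sub_star_mul_mul_le {E : Type*} [NormedRing E] [StarRing E] [CStarRing E]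
    {u v : E} (hu : u ∈ unitary E) (hv : v ∈ unitary E) (a : E) :
    ‖star u * a * u - star v * a * v‖ ≤ 2 * ‖a‖ * ‖u - v‖ :=
  calc ‖star u * a * u - star v * a * v‖
      = ‖star (u - v) * a * u + star v * (a * (u - v))‖ := by
        rw [star_sub]
        noncomm_ring
    _ ≤ ‖star (u - v) * a * u‖ + ‖star v * (a * (u - v))‖ := norm_add_le _ _
    _ = ‖star (u - v) * a‖ + ‖a * (u - v)‖ := by
        rw [CStarRing.norm_mul_mem_unitary _ hu,
          CStarRing.norm_mem_unitary_mul _ (Unitary.star_mem hv)]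
    _ ≤ ‖u - v‖ * ‖a‖ + ‖a‖ * ‖u - v‖ :=
        add_le_add ((norm_mul_le _ _).trans_eq (by rw [norm_star])) (norm_mul_le _ _)
    _ = 2 * ‖a‖ * ‖u - v‖ := by ring

section Circuit

variable {m L : ℕ} {V : ℕ → Matrix (Fin 4 × Fin m) (Fin 4 × Fin m) ℂ}
  {U W : ℕ → Matrix (Fin 4) (Fin 4) ℂ}

lemma circuit_mem_unitaryGroup (hV : ∀ s ≤ L, V s ∈ unitaryGroup (Fin 4 × Fin m) ℂ)
    (hU : ∀ t < L, U t ∈ unitaryGroup (Fin 4) ℂ) :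
    circuit V U L ∈ unitaryGroup (Fin 4 × Fin m) ℂ := by
  induction L with
  | zero => exact hV 0 le_rfl
  | succ L ih =>
    exact mul_mem (mul_mem (hV _ le_rfl) (kronecker_mem_unitary (hU L L.lt_succ_self) (one_mem _)))
      (ih (fun s hs ↦ hV s (by lia)) fun t ht ↦ hU t (by lia))

lemma norm_circuit_sub_le (hV : ∀ s ≤ L, V s ∈ unitaryGroup (Fin 4 × Fin m) ℂ)
    (hU : ∀ t < L, U t ∈ unitaryGroup (Fin 4) ℂ) (hW : ∀ t < L, W t ∈ unitaryGroup (Fin 4) ℂ) :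
    ‖circuit V U L - circuit V W L‖ ≤ ∑ t ∈ Finset.range L, ‖U t - W t‖ := by
  induction L with
  | zero => simp [circuit]
  | succ L ih =>
    have hV' : ∀ s ≤ L, V s ∈ unitaryGroup (Fin 4 × Fin m) ℂ := fun s hs ↦ hV s (by lia)
    have hU' : ∀ t < L, U t ∈ unitaryGroup (Fin 4) ℂ := fun t ht ↦ hU t (by lia)
    have hW' : ∀ t < L, W t ∈ unitaryGroup (Fin 4) ℂ := fun t ht ↦ hW t (by lia)
    have gate_mem : W L ⊗ₖ (1 : Matrix (Fin m) (Fin m) ℂ) ∈ unitaryGroup (Fin 4 × Fin m) ℂ :=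
      kronecker_mem_unitary (hW L L.lt_succ_self) (one_mem _)
    have sub_kronecker : (U L - W L) ⊗ₖ (1 : Matrix (Fin m) (Fin m) ℂ) = U L ⊗ₖ 1 - W L ⊗ₖ 1 :=
      map_sub (kroneckerOneStarAlgHom (Fin 4) (Fin m)) (U L) (W L)
    have telescope : circuit V U (L + 1) - circuit V W (L + 1)
        = V (L + 1) * (((U L - W L) ⊗ₖ (1 : Matrix (Fin m) (Fin m) ℂ)) * circuit V U L
          + (W L ⊗ₖ (1 : Matrix (Fin m) (Fin m) ℂ)) * (circuit V U L - circuit V W L)) := by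
      simp only [circuit, sub_kronecker]
      noncomm_ring
    calc ‖circuit V U (L + 1) - circuit V W (L + 1)‖
        ≤ ‖(U L - W L) ⊗ₖ (1 : Matrix (Fin m) (Fin m) ℂ)‖ + ‖circuit V U L - circuit V W L‖ := by
          rw [telescope, CStarRing.norm_mem_unitary_mul _ (hV _ le_rfl),
            ← CStarRing.norm_mul_mem_unitary (_ ⊗ₖ _) (circuit_mem_unitaryGroup hV' hU'),
            ← CStarRing.norm_mem_unitary_mul (_ - _) gate_mem]
          exact norm_add_le _ _
      _ ≤ ‖U L - W L‖ + ∑ t ∈ Finset.range L, ‖U t - W t‖ :=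
          add_le_add (norm_kronecker_one_le _) (ih hV' hU' hW')
      _ = ∑ t ∈ Finset.range (L + 1), ‖U t - W t‖ := by rw [Finset.sum_range_succ, add_comm]

end Circuit

section Loss

variable {m L : ℕ} {Z : Type*} {V : ℕ → Matrix (Fin 4 × Fin m) (Fin 4 × Fin m) ℂ}
  {O ρ : Z → Matrix (Fin 4 × Fin m) (Fin 4 × Fin m) ℂ} {C : ℝ}
  {U W : ℕ → Matrix (Fin 4) (Fin 4) ℂ} {z : Z}

/-- The hypothesis class of one architecture: its losses at all unitary parameter settings. -/
def qlossClass (V : ℕ → Matrix (Fin 4 × Fin m) (Fin 4 × Fin m) ℂ) (L : ℕ)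
    (O ρ : Z → Matrix (Fin 4 × Fin m) (Fin 4 × Fin m) ℂ) : Set (Z → ℝ) :=
  qloss V L O ρ '' {U | ∀ t < L, U t ∈ unitaryGroup (Fin 4) ℂ}

lemma qloss_eq_re_trace_heisenberg :
    qloss V L O ρ U z = (star (circuit V U L) * O z * circuit V U L * ρ z).trace.re := by
  rw [qloss, trace_mul_comm, star_eq_conjTranspose]
  simp only [Matrix.mul_assoc]

lemma abs_qloss_le (hV : ∀ s ≤ L, V s ∈ unitaryGroup (Fin 4 × Fin m) ℂ)
    (hU : ∀ t < L, U t ∈ unitaryGroup (Fin 4) ℂ)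
    (hρ : (ρ z).PosSemidef ∧ (ρ z).trace = 1) (hO : opNorm (O z) ≤ C) :
    |qloss V L O ρ U z| ≤ C := by
  have hF := circuit_mem_unitaryGroup hV hU
  calc |qloss V L O ρ U z|
      ≤ ‖star (circuit V U L) * O z * circuit V U L‖ * ‖(ρ z).trace‖ := by
        rw [qloss_eq_re_trace_heisenberg]
        exact (Complex.abs_re_le_norm _).trans (norm_trace_mul_le_of_posSemidef _ hρ.1)
    _ = ‖O z‖ := by
        rw [hρ.2, norm_one, mul_one, CStarRing.norm_mul_mem_unitary _ hF,
          CStarRing.norm_mem_unitary_mul _ (Unitary.star_mem hF)]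
    _ ≤ C := hO

lemma abs_qloss_sub_le (hV : ∀ s ≤ L, V s ∈ unitaryGroup (Fin 4 × Fin m) ℂ)
    (hU : ∀ t < L, U t ∈ unitaryGroup (Fin 4) ℂ) (hW : ∀ t < L, W t ∈ unitaryGroup (Fin 4) ℂ)
    (hρ : (ρ z).PosSemidef ∧ (ρ z).trace = 1) (hO : opNorm (O z) ≤ C) :
    |qloss V L O ρ U z - qloss V L O ρ W z| ≤ 2 * C * ∑ t ∈ Finset.range L, ‖U t - W t‖ := by
  have hOC : ‖O z‖ ≤ C := hO
  have hC : 0 ≤ C := (norm_nonneg _).trans hOC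
  rw [qloss_eq_re_trace_heisenberg, qloss_eq_re_trace_heisenberg, ← Complex.sub_re, ← trace_sub,
    ← Matrix.sub_mul]
  refine (Complex.abs_re_le_norm _).trans <| (norm_trace_mul_le_of_posSemidef _ hρ.1).trans ?_
  rw [hρ.2, norm_one, mul_one]
  calc _ ≤ 2 * ‖O z‖ * ‖circuit V U L - circuit V W L‖ :=
        norm_star_mul_mul_sub_star_mul_mul_le (circuit_mem_unitaryGroup hV hU)
          (circuit_mem_unitaryGroup hV hW) _
    _ ≤ 2 * C * ∑ t ∈ Finset.range L, ‖U t - W t‖ := by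
        gcongr
        exact norm_circuit_sub_le hV hU hW

lemma measurable_qloss [MeasurableSpace Z] (hρ : ∀ p q, Measurable fun z ↦ ρ z p q)
    (hO : ∀ p q, Measurable fun z ↦ O z p q) : Measurable (qloss V L O ρ U) := by
  unfold qloss
  simp only [Matrix.trace, Matrix.diag, Matrix.mul_apply]
  fun_prop

end Loss

end OperatorNorm

section CoveringNumber

open Module Metric
open scoped NNReal

variable {E : Type*} [NormedAddCommGroup E] [NormedSpace ℝ E] [FiniteDimensional ℝ E]
  {A : Set E} {x₀ : E} {R : ℝ}

lemma card_le_of_pairwise_lt_dist {s : Finset E} {ε : ℝ} (hR : 0 ≤ R) (hε : 0 < ε)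
    (subset_ball : ↑s ⊆ closedBall x₀ R) (hs : (s : Set E).Pairwise (ε < dist · ·)) :
    (s.card : ℝ) ≤ (1 + 2 * R / ε) ^ finrank ℝ E := by
  borelize E
  let ν : Measure E := Measure.addHaar
  have disjoint_balls : (s : Set E).PairwiseDisjoint (closedBall · (ε / 2)) := fun x hx y hy hxy ↦
    closedBall_disjoint_closedBall ((add_halves ε).trans_lt (hs hx hy hxy))
  have union_subset : ⋃ x ∈ s, closedBall x (ε / 2) ⊆ closedBall x₀ (R + ε / 2) :=
    Set.iUnion₂_subset fun x hx ↦ closedBall_subset_closedBall' <| by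
      linarith [mem_closedBall.mp (subset_ball hx)]
  have unit_ball_pos : 0 < ν.real (ball 0 1) :=
    ENNReal.toReal_pos (measure_ball_pos ν 0 one_pos).ne' measure_ball_lt_top.ne
  have volume_le : s.card * (ε / 2) ^ finrank ℝ E ≤ (R + ε / 2) ^ finrank ℝ E := by
    refine le_of_mul_le_mul_right ?_ unit_ball_pos
    calc s.card * (ε / 2) ^ finrank ℝ E * ν.real (ball 0 1)
        = ν.real (⋃ x ∈ s, closedBall x (ε / 2)) := by
          rw [measureReal_biUnion_finset disjoint_balls (fun x _ ↦ measurableSet_closedBall)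
            fun x _ ↦ measure_closedBall_lt_top.ne]
          simp only [ν.addHaar_real_closedBall _ (half_pos hε).le, Finset.sum_const, nsmul_eq_mul,
            mul_assoc]
      _ ≤ ν.real (closedBall x₀ (R + ε / 2)) :=
          measureReal_mono union_subset measure_closedBall_lt_top.ne
      _ = (R + ε / 2) ^ finrank ℝ E * ν.real (ball 0 1) :=
          ν.addHaar_real_closedBall _ (by positivity)
  calc (s.card : ℝ) ≤ (R + ε / 2) ^ finrank ℝ E / (ε / 2) ^ finrank ℝ E :=
        (le_div_iff₀ (by positivity)).mpr volume_le
    _ = (1 + 2 * R / ε) ^ finrank ℝ E := by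
        rw [← div_pow]
        congr 1
        field

lemma packingNumber_le_of_subset_closedBall {ε : ℝ≥0} (hR : 0 ≤ R) (hε : 0 < ε)
    (subset_ball : A ⊆ closedBall x₀ R) :
    packingNumber ε A ≤ ⌊(1 + 2 * R / ε) ^ finrank ℝ E⌋₊ := by
  refine iSup₂_le fun C hCA ↦ iSup_le fun hC ↦ le_of_not_gt fun lt_encard ↦ ?_
  obtain ⟨t, htC, t_encard⟩ := Set.exists_subset_encard_eq (Order.add_one_le_of_lt lt_encard)
  lift t to Finset E using Set.finite_of_encard_eq_coe (mod_cast t_encard)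
  have card_eq : t.card = ⌊(1 + 2 * R / ε) ^ finrank ℝ E⌋₊ + 1 := by
    rw [Set.encard_coe_eq_coe_finsetCard] at t_encard
    exact mod_cast t_encard
  have t_separated : (t : Set E).Pairwise ((ε : ℝ) < dist · ·) := fun x hx y hy hxy ↦
    lt_of_not_ge fun dist_le ↦ (hC (htC hx) (htC hy) hxy).not_ge (edist_le_coe.mpr dist_le)
  have card_le := Nat.le_floor
    (card_le_of_pairwise_lt_dist hR hε ((htC.trans hCA).trans subset_ball) t_separated)
  exact absurd card_le (card_eq ▸ Nat.not_succ_le_self _)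

lemma exists_finset_net_sequences {ε : ℝ} (hR : 0 ≤ R) (hε : 0 < ε)
    (subset_ball : A ⊆ closedBall x₀ R) (n : ℕ) :
    ∃ s : Finset (ℕ → E), (∀ v ∈ s, ∀ t < n, v t ∈ A) ∧
      (s.card : ℝ) ≤ (1 + 2 * R / ε) ^ (n * finrank ℝ E) ∧
      ∀ w : ℕ → E, (∀ t < n, w t ∈ A) → ∃ v ∈ s, ∀ t < n, ‖w t - v t‖ ≤ ε := by
  classical
  lift ε to ℝ≥0 using hε.le
  let B : Set (Fin n → E) := Set.univ.pi fun _ ↦ A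
  have packing_le := packingNumber_le_of_subset_closedBall (A := B) (x₀ := fun _ ↦ x₀) hR
    (mod_cast hε : 0 < ε) fun w hw ↦ (dist_pi_le_iff hR).mpr fun i ↦ subset_ball (hw i trivial)
  have packing_ne_top : packingNumber ε B ≠ ⊤ :=
    ne_top_of_le_ne_top (ENat.natCast_ne_top _) packing_le
  obtain ⟨s, hs⟩ := (Set.finite_of_encard_le_coe
    ((encard_maximalSeparatedSet packing_ne_top).trans_le packing_le)).exists_finset_coe
  let extend : (Fin n → E) → ℕ → E := fun v t ↦ if h : t < n then v ⟨t, h⟩ else 0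
  refine ⟨s.image extend, fun u hu t ht ↦ ?_, ?_, fun w hw ↦ ?_⟩
  · obtain ⟨v, hv, rfl⟩ := Finset.mem_image.mp hu
    have hvB : v ∈ B := maximalSeparatedSet_subset (hs.subset hv)
    simpa [extend, ht] using hvB ⟨t, ht⟩ trivial
  · have card_le : s.card ≤ ⌊(1 + 2 * R / ε) ^ finrank ℝ (Fin n → E)⌋₊ := by
      rw [← encard_maximalSeparatedSet packing_ne_top, ← hs,
        Set.encard_coe_eq_coe_finsetCard] at packing_le
      exact mod_cast packing_le
    calc ((s.image extend).card : ℝ) ≤ s.card := mod_cast Finset.card_image_le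
      _ ≤ (1 + 2 * R / ε) ^ finrank ℝ (Fin n → E) :=
          (Nat.le_floor_iff (by positivity)).mp card_le
      _ = (1 + 2 * R / ε) ^ (n * finrank ℝ E) := by
          simp [finrank_pi_fintype]
  · obtain ⟨v, hv, edist_le⟩ := isCover_maximalSeparatedSet packing_ne_top
      (show (fun i : Fin n ↦ w i) ∈ B from fun i _ ↦ hw i i.isLt)
    refine ⟨extend v, Finset.mem_image_of_mem _ (hs.superset hv), fun t ht ↦ ?_⟩
    have dist_le := (dist_le_pi_dist _ v ⟨t, ht⟩).trans (edist_le_coe.mp edist_le)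
    simpa [extend, ht, dist_eq_norm] using dist_le

end CoveringNumber

lemma exp_neg_natCast_le_half_pow (n : ℕ) : Real.exp (-n) ≤ (1 / 2) ^ n :=
  calc Real.exp (-n) = Real.exp (-1) ^ n := by rw [← Real.exp_nat_mul, mul_neg_one]
    _ ≤ (1 / 2) ^ n := by
      gcongr
      linarith [Real.exp_neg_one_lt_half]

lemma sum_range_succ_mul_half_pow_le (K : ℕ) :
    ∑ k ∈ Finset.range K, ((k : ℝ) + 1) * (1 / 2) ^ (k + 1) ≤ 2 := by
  have hasSum_two : HasSum (fun k : ℕ ↦ (k : ℝ) * (1 / 2) ^ k) 2 := by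
    have h := hasSum_coe_mul_geometric_of_norm_lt_one (r := (1 / 2 : ℝ)) (by norm_num)
    norm_num at h ⊢
    exact h
  have partial_sum_le := sum_le_hasSum (Finset.range (K + 1)) (fun k _ ↦ by positivity) hasSum_two
  simpa [Finset.sum_range_succ'] using partial_sum_le

lemma measure_iUnion_le_of_forall_le_half_pow {Ω : Type*} [MeasurableSpace Ω] {ν : Measure Ω}
    {E : ℕ → Set Ω} {p : ℝ} (hp : 0 ≤ p)
    (hE : ∀ k, ν (E k) ≤ ENNReal.ofReal (p * (1 / 2) ^ (k + 1))) :
    ν (⋃ k, E k) ≤ ENNReal.ofReal p := by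
  have hasSum_p : HasSum (fun k : ℕ ↦ p * (1 / 2) ^ (k + 1)) p := by
    simpa [pow_succ', ← mul_assoc] using hasSum_geometric_two.mul_left (p * (1 / 2))
  calc ν (⋃ k, E k) ≤ ∑' k, ENNReal.ofReal (p * (1 / 2) ^ (k + 1)) :=
        (measure_iUnion_le E).trans (ENNReal.tsum_le_tsum hE)
    _ = ENNReal.ofReal p := by
        rw [← ENNReal.ofReal_tsum_of_nonneg (fun k ↦ by positivity) hasSum_p.summable,
          hasSum_p.tsum_eq]

section GeneralizationGap

open ProbabilityTheory

variable {Z : Type*} [MeasurableSpace Z] {μ : Measure Z} {N : ℕ} {g h : Z → ℝ} {B : ℝ}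

/-- The generalization gap of the function `g` on the sample `S`: its expectation minus its
empirical mean. -/
noncomputable def generalizationGap (μ : Measure Z) (g : Z → ℝ) (S : Fin N → Z) : ℝ :=
  (∫ z, g z ∂μ) - (1 / N) * ∑ i, g (S i)

lemma generalizationGap_zero (S : Fin N → Z) : generalizationGap μ 0 S = 0 := by
  simp [generalizationGap]

lemma generalizationGap_sub (hg : Integrable g μ) (hh : Integrable h μ) (S : Fin N → Z) :
    generalizationGap μ (g - h) S = generalizationGap μ g S - generalizationGap μ h S := by
  simp only [generalizationGap, Pi.sub_apply, integral_sub hg hh, Finset.sum_sub_distrib]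
  ring

variable [IsProbabilityMeasure μ]

lemma generalizationGap_le (hN : 0 < N) (hB : ∀ z, |g z| ≤ B) (S : Fin N → Z) :
    generalizationGap μ g S ≤ 2 * B := by
  have integral_le : ‖∫ z, g z ∂μ‖ ≤ B := by
    simpa using norm_integral_le_of_norm_le_const (μ := μ) (f := g) (.of_forall hB)
  have le_mean : -B ≤ (1 / N) * ∑ i, g (S i) :=
    calc -B = (1 / N) * ∑ _i : Fin N, -B := by simp [hN.ne']
      _ ≤ (1 / N) * ∑ i, g (S i) := by
        gcongr with i
        exact (abs_le.mp (hB _)).1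
  rw [generalizationGap]
  linarith [le_of_abs_le integral_le]

lemma measureReal_generalizationGap_ge_le (hN : 0 < N) (hg : Measurable g) (hB : ∀ z, |g z| ≤ B)
    {ε : ℝ} (hε : 0 ≤ ε) :
    (Measure.pi fun _ : Fin N ↦ μ).real {S | ε ≤ generalizationGap μ g S}
      ≤ Real.exp (-(N * ε ^ 2 / (2 * B ^ 2))) := by
  let X : Z → ℝ := -fun z ↦ g z - ∫ z, g z ∂μ
  have subgaussian : HasSubgaussianMGF X ((‖B - -B‖₊ / 2) ^ 2) μ :=
    (hasSubgaussianMGF_of_mem_Icc hg.aemeasurable (.of_forall fun z ↦ abs_le.mp (hB z))).neg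
  have subgaussian_eval (i : Fin N) : HasSubgaussianMGF (fun S ↦ X (S i)) ((‖B - -B‖₊ / 2) ^ 2)
      (Measure.pi fun _ : Fin N ↦ μ) := by
    have eval_preserving := measurePreserving_eval (fun _ : Fin N ↦ μ) i
    refine .of_map eval_preserving.aemeasurable ?_
    rwa [eval_preserving.map_eq]
  have hoeffding := HasSubgaussianMGF.measure_sum_ge_le_of_iIndepFun (s := Finset.univ)
    (iIndepFun_pi (μ := fun _ : Fin N ↦ μ) fun _ ↦ subgaussian.aemeasurable)
    (fun i _ ↦ subgaussian_eval i) (mul_nonneg N.cast_nonneg hε)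
  have sum_eq (S : Fin N → Z) : ∑ i, X (S i) = N * generalizationGap μ g S := by
    simp [X, generalizationGap, mul_sub, hN.ne']
  have variance_eq : ((∑ _i : Fin N, (‖B - -B‖₊ / 2) ^ 2 : NNReal) : ℝ) = N * B ^ 2 := by
    simp [← two_mul]
  rw [variance_eq] at hoeffding
  calc _ = (Measure.pi fun _ : Fin N ↦ μ).real {S | N * ε ≤ ∑ i, X (S i)} := by simp [sum_eq, hN]
    _ ≤ Real.exp (-(N * ε) ^ 2 / (2 * (N * B ^ 2))) := hoeffding
    _ = Real.exp (-(N * ε ^ 2 / (2 * B ^ 2))) := by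
      congr 1
      field

lemma measure_exists_generalizationGap_ge_le (hN : 0 < N) {s : Finset (Z → ℝ)}
    (hs : ∀ g ∈ s, Measurable g) (hB : ∀ g ∈ s, ∀ z, |g z| ≤ B) {ε : ℝ} (hε : 0 ≤ ε) :
    (Measure.pi fun _ : Fin N ↦ μ) {S | ∃ g ∈ s, ε ≤ generalizationGap μ g S}
      ≤ ENNReal.ofReal (s.card * Real.exp (-(N * ε ^ 2 / (2 * B ^ 2)))) := by
  have union_eq : {S : Fin N → Z | ∃ g ∈ s, ε ≤ generalizationGap μ g S}
      = ⋃ g ∈ s, {S | ε ≤ generalizationGap μ g S} := by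
    ext S
    simp
  rw [union_eq, ← ofReal_measureReal (measure_ne_top _ _), ← nsmul_eq_mul, ← Finset.sum_const]
  refine ENNReal.ofReal_le_ofReal ((measureReal_biUnion_finset_le s _).trans ?_)
  gcongr with g hg
  exact measureReal_generalizationGap_ge_le hN (hs g hg) (hB g hg) hε

end GeneralizationGap

section Chaining

open scoped Pointwise

variable {Z : Type*} [MeasurableSpace Z] {μ : Measure Z} {N : ℕ} {F : Set (Z → ℝ)}
  {C H : ℝ} {net : ℕ → Finset (Z → ℝ)} {f : Z → ℝ}

/-- A chain of finite approximations of the function class `F`: in the sup norm every element of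
`F` is within `C * 2⁻ᵏ` of the `k`-th net, whose metric entropy is at most `H * k`. The chain starts
at the zero function, so `F` is uniformly bounded by `C`. -/
structure IsChainingNet (F : Set (Z → ℝ)) (C H : ℝ) (net : ℕ → Finset (Z → ℝ)) : Prop where
  zero : net 0 = {0}
  card_le (k : ℕ) : ((net k).card : ℝ) ≤ Real.exp (H * k)
  measurable (k : ℕ) : ∀ g ∈ net k, Measurable g
  exists_close (k : ℕ) : ∀ f ∈ F, ∃ g ∈ net k, ∀ z, |f z - g z| ≤ C * (1 / 2) ^ k

open Classical in
/-- The links of level `k` of a chain: the differences of elements of two successive nets that are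
as close as two successive approximations of the same function. -/
noncomputable def chainingLinks (C : ℝ) (net : ℕ → Finset (Z → ℝ)) (k : ℕ) : Finset (Z → ℝ) :=
  {h ∈ net (k + 1) - net k | ∀ z, |h z| ≤ 3 * C * (1 / 2) ^ (k + 1)}

namespace IsChainingNet

lemma card_chainingLinks_le (hnet : IsChainingNet F C H net) (k : ℕ) :
    ((chainingLinks C net k).card : ℝ) ≤ Real.exp (H * (2 * k + 1)) := by
  classical
  calc ((chainingLinks C net k).card : ℝ)
      ≤ (net (k + 1)).card * (net k).card := by
        exact_mod_cast (Finset.card_filter_le _ _).trans Finset.card_sub_le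
    _ ≤ Real.exp (H * (k + 1 : ℕ)) * Real.exp (H * k) := by
        gcongr
        exacts [hnet.card_le _, hnet.card_le _]
    _ = Real.exp (H * (2 * k + 1)) := by
        rw [← Real.exp_add]
        push_cast
        ring_nf

lemma measurable_of_mem_chainingLinks (hnet : IsChainingNet F C H net) {k : ℕ}
    {h : Z → ℝ} (hh : h ∈ chainingLinks C net k) : Measurable h := by
  classical
  obtain ⟨g, hg, g', hg', rfl⟩ := Finset.mem_sub.mp (Finset.mem_filter.mp hh).1
  exact (hnet.measurable _ g hg).sub (hnet.measurable _ g' hg')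

lemma exists_chain (hnet : IsChainingNet F C H net) (hf : f ∈ F) :
    ∃ g : ℕ → Z → ℝ, g 0 = 0 ∧ (∀ k, g (k + 1) - g k ∈ chainingLinks C net k) ∧
      ∀ k, Measurable (g k) ∧ ∀ z, |f z - g k z| ≤ C * (1 / 2) ^ k := by
  classical
  choose g hg close using fun k ↦ hnet.exists_close k f hf
  refine ⟨g, by simpa [hnet.zero] using hg 0, fun k ↦ ?_,
    fun k ↦ ⟨hnet.measurable k _ (hg k), close k⟩⟩
  refine Finset.mem_filter.mpr ⟨Finset.sub_mem_sub (hg _) (hg k), fun z ↦ ?_⟩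
  calc |(g (k + 1) - g k) z| ≤ |g (k + 1) z - f z| + |f z - g k z| := abs_sub_le _ _ _
    _ ≤ C * (1 / 2) ^ (k + 1) + C * (1 / 2) ^ k :=
      add_le_add (abs_sub_comm (f z) _ ▸ close (k + 1) z) (close k z)
    _ = 3 * C * (1 / 2) ^ (k + 1) := by ring

variable [IsProbabilityMeasure μ]

-- The factor `k + 1` pays both for the entropy `H * (2 * k + 1)` of the links and for the union
-- bound over `k`.
lemma measure_exists_link_ge_le (hnet : IsChainingNet F C H net) (hN : 0 < N) (hC : 0 < C)
    (hH : 0 ≤ H) {u : ℝ} (hu : 0 ≤ u) (k : ℕ) :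
    (Measure.pi fun _ : Fin N ↦ μ) {S | ∃ h ∈ chainingLinks C net k,
        3 * C * (1 / 2) ^ (k + 1) * ((k + 1) * √(2 * (H + u + 1) / N)) ≤ generalizationGap μ h S}
      ≤ ENNReal.ofReal (Real.exp (-u) * (1 / 2) ^ (k + 1)) := by
  classical
  have exponent_eq : N * (3 * C * (1 / 2) ^ (k + 1) * ((k + 1) * √(2 * (H + u + 1) / N))) ^ 2
      / (2 * (3 * C * (1 / 2) ^ (k + 1)) ^ 2) = (k + 1) ^ 2 * (H + u + 1) := by
    rw [mul_pow _ (_ * √_), mul_pow _ √_, Real.sq_sqrt (by positivity)]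
    field
  refine (measure_exists_generalizationGap_ge_le hN
    (fun h ↦ hnet.measurable_of_mem_chainingLinks) (fun h hh ↦ (Finset.mem_filter.mp hh).2)
    (by positivity)).trans (ENNReal.ofReal_le_ofReal ?_)
  rw [exponent_eq]
  calc _ ≤ Real.exp (H * (2 * k + 1)) * Real.exp (-((k + 1) ^ 2 * (H + u + 1))) := by
        gcongr
        exact hnet.card_chainingLinks_le k
    _ ≤ Real.exp (-u) * Real.exp (-(k + 1 : ℕ)) := by
        rw [← Real.exp_add, ← Real.exp_add]
        refine Real.exp_le_exp.mpr ?_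
        push_cast
        nlinarith [mul_nonneg hH (sq_nonneg (k : ℝ)), mul_nonneg hu k.cast_nonneg,
          mul_nonneg hu (sq_nonneg (k : ℝ))]
    _ ≤ Real.exp (-u) * (1 / 2) ^ (k + 1) := by
        gcongr
        exact exp_neg_natCast_le_half_pow _

lemma generalizationGap_le_of_forall_link_le (hnet : IsChainingNet F C H net) (hN : 0 < N)
    (hC : 0 ≤ C) (hf : f ∈ F) (f_measurable : Measurable f) {S : Fin N → Z} {r : ℝ} (hr : 0 ≤ r)
    (hS : ∀ k, ∀ h ∈ chainingLinks C net k,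
      generalizationGap μ h S ≤ 3 * C * (1 / 2) ^ (k + 1) * ((k + 1) * r)) :
    generalizationGap μ f S ≤ 6 * C * r := by
  obtain ⟨g, g_zero, link, approx⟩ := hnet.exists_chain hf
  have residual_integrable (k : ℕ) : Integrable (f - g k) μ :=
    .of_bound (f_measurable.sub (approx k).1).aestronglyMeasurable _ (.of_forall (approx k).2)
  have f_integrable : Integrable f μ := by simpa [g_zero] using residual_integrable 0
  have g_integrable (k : ℕ) : Integrable (g k) μ := by
    simpa using f_integrable.sub (residual_integrable k)
  have gap_net_le (K : ℕ) : generalizationGap μ (g K) S ≤ 6 * C * r :=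
    calc generalizationGap μ (g K) S
        = ∑ k ∈ Finset.range K, generalizationGap μ (g (k + 1) - g k) S := by
          simp only [generalizationGap_sub (g_integrable _) (g_integrable _)]
          rw [Finset.sum_range_sub fun k ↦ generalizationGap μ (g k) S, g_zero,
            generalizationGap_zero, sub_zero]
      _ ≤ ∑ k ∈ Finset.range K, 3 * C * (1 / 2) ^ (k + 1) * ((k + 1) * r) :=
          Finset.sum_le_sum fun k _ ↦ hS k _ (link k)
      _ = 3 * C * r * ∑ k ∈ Finset.range K, ((k : ℝ) + 1) * (1 / 2) ^ (k + 1) := by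
          rw [Finset.mul_sum]
          exact Finset.sum_congr rfl fun k _ ↦ by ring
      _ ≤ 3 * C * r * 2 := by
          gcongr
          exact sum_range_succ_mul_half_pow_le K
      _ = 6 * C * r := by ring
  have gap_le (K : ℕ) : generalizationGap μ f S ≤ 6 * C * r + 2 * (C * (1 / 2) ^ K) := by
    have residual_gap_le := generalizationGap_le (μ := μ) (g := f - g K) hN (approx K).2 S
    have gap_sub := generalizationGap_sub f_integrable (g_integrable K) S
    linarith [gap_net_le K]
  have remainder_tendsto :
      Filter.Tendsto (fun K : ℕ ↦ 6 * C * r + 2 * (C * (1 / 2) ^ K)) .atTop (nhds (6 * C * r)) := by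
    simpa using (((tendsto_pow_atTop_nhds_zero_of_lt_one (r := (1 / 2 : ℝ)) (by norm_num)
      (by norm_num)).const_mul C).const_mul 2).const_add (6 * C * r)
  exact ge_of_tendsto' remainder_tendsto gap_le

theorem measure_exists_generalizationGap_gt_le (hnet : IsChainingNet F C H net)
    (hF : ∀ f ∈ F, Measurable f) (hN : 0 < N) (hC : 0 < C) (hH : 0 ≤ H) {u : ℝ} (hu : 0 ≤ u) :
    (Measure.pi fun _ : Fin N ↦ μ) {S | ∃ f ∈ F,
        6 * C * √(2 * (H + u + 1) / N) < generalizationGap μ f S}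
      ≤ ENNReal.ofReal (Real.exp (-u)) := by
  refine (measure_mono ?_).trans (measure_iUnion_le_of_forall_le_half_pow (Real.exp_pos _).le
    (hnet.measure_exists_link_ge_le hN hC hH hu))
  rintro S ⟨f, hf, gap_gt⟩
  contrapose! gap_gt with links_le
  simp only [Set.mem_iUnion, Set.mem_ofPred_eq, not_exists, not_and, not_le] at links_le
  exact hnet.generalizationGap_le_of_forall_link_le hN hC.le hf (hF f hf) (Real.sqrt_nonneg _)
    fun k h hh ↦ (links_le k h hh).le

end IsChainingNet

end Chaining

section VariableStructure

open Module
open scoped Matrix.Norms.L2Operator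

section SingleArchitecture

variable {m τ : ℕ} {Z : Type*}
  {V : ℕ → Matrix (Fin 4 × Fin m) (Fin 4 × Fin m) ℂ}
  {O ρ : Z → Matrix (Fin 4 × Fin m) (Fin 4 × Fin m) ℂ} {C : ℝ}

lemma one_add_four_mul_two_pow_pow_le (hτ : 0 < τ) (k : ℕ) :
    (1 + 4 * τ * 2 ^ (k + 1) : ℝ) ^ (τ * 32)
      ≤ Real.exp (96 * (τ * (1 + Real.log τ)) * (k + 1 : ℕ)) := by
  have τ_ge_one : (1 : ℝ) ≤ τ := mod_cast hτ
  have log_nonneg := Real.log_nonneg τ_ge_one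
  have two_le_exp : (2 : ℝ) ≤ Real.exp 1 := by linarith [Real.exp_one_gt_d9]
  have five_le_exp_sq : (5 : ℝ) ≤ Real.exp 1 ^ 2 := by nlinarith [Real.exp_one_gt_d9]
  have base_le : 1 + 4 * τ * 2 ^ (k + 1) ≤ Real.exp (3 * ((1 + Real.log τ) * (k + 1))) :=
    calc (1 + 4 * τ * 2 ^ (k + 1) : ℝ) ≤ τ * 2 ^ (k + 1) * 5 := by
          nlinarith [one_le_mul_of_one_le_of_one_le τ_ge_one
            (one_le_pow₀ (n := k + 1) one_le_two)]
      _ ≤ Real.exp (Real.log τ) * Real.exp 1 ^ (k + 1) * Real.exp 1 ^ 2 := by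
          rw [Real.exp_log (by positivity)]
          gcongr
      _ = Real.exp (Real.log τ + (k + 1) + 2) := by
          simp [Real.exp_add, ← Real.exp_nat_mul]
      _ ≤ Real.exp (3 * ((1 + Real.log τ) * (k + 1))) := by
          refine Real.exp_le_exp.mpr ?_
          nlinarith [mul_nonneg log_nonneg k.cast_nonneg, (k.cast_nonneg : (0 : ℝ) ≤ k)]
  calc (1 + 4 * τ * 2 ^ (k + 1) : ℝ) ^ (τ * 32)
      ≤ Real.exp (3 * ((1 + Real.log τ) * (k + 1))) ^ (τ * 32) := by gcongr
    _ = Real.exp (96 * (τ * (1 + Real.log τ)) * (k + 1 : ℕ)) := by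
        rw [← Real.exp_nat_mul]
        push_cast
        ring_nf

lemma exists_finset_net_qlossClass (hτ : 0 < τ)
    (hV : ∀ s ≤ τ, V s ∈ unitaryGroup (Fin 4 × Fin m) ℂ)
    (hρ : ∀ z, (ρ z).PosSemidef ∧ (ρ z).trace = 1) (hC : 0 ≤ C) (hO : ∀ z, opNorm (O z) ≤ C)
    (k : ℕ) :
    ∃ s : Finset (Z → ℝ), ↑s ⊆ qlossClass V τ O ρ ∧
      (s.card : ℝ) ≤ Real.exp (96 * (τ * (1 + Real.log τ)) * (k + 1 : ℕ)) ∧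
      ∀ f ∈ qlossClass V τ O ρ, ∃ g ∈ s, ∀ z, |f z - g z| ≤ C * (1 / 2) ^ (k + 1) := by
  classical
  have unitary_subset : (unitaryGroup (Fin 4) ℂ : Set (Matrix (Fin 4) (Fin 4) ℂ))
      ⊆ Metric.closedBall 0 1 := fun U hU ↦
    mem_closedBall_zero_iff.mpr (CStarRing.norm_of_mem_unitary hU).le
  have finrank_eq : finrank ℝ (Matrix (Fin 4) (Fin 4) ℂ) = 32 := by
    simp [finrank_matrix]
  obtain ⟨s, s_unitary, s_card, s_net⟩ := exists_finset_net_sequences zero_le_one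
    (ε := 1 / (2 * τ * 2 ^ (k + 1))) (by positivity) unitary_subset τ
  refine ⟨s.image (qloss V τ O ρ), ?_, ?_, ?_⟩
  · rw [Finset.coe_image]
    exact Set.image_mono s_unitary
  · calc ((s.image (qloss V τ O ρ)).card : ℝ) ≤ s.card := mod_cast Finset.card_image_le
      _ ≤ (1 + 4 * τ * 2 ^ (k + 1)) ^ (τ * 32) := by
          rw [finrank_eq] at s_card
          refine s_card.trans_eq ?_
          congr 1
          field
      _ ≤ _ := one_add_four_mul_two_pow_pow_le hτ k
  · rintro _ ⟨U, hU, rfl⟩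
    obtain ⟨W, hW, close⟩ := s_net U hU
    refine ⟨_, Finset.mem_image_of_mem _ hW, fun z ↦ ?_⟩
    calc |qloss V τ O ρ U z - qloss V τ O ρ W z|
        ≤ 2 * C * ∑ t ∈ Finset.range τ, ‖U t - W t‖ :=
          abs_qloss_sub_le hV hU (s_unitary W hW) (hρ z) (hO z)
      _ ≤ 2 * C * ∑ _t ∈ Finset.range τ, 1 / (2 * τ * 2 ^ (k + 1) : ℝ) := by
          gcongr with t ht
          exact close t (Finset.mem_range.mp ht)
      _ = C * (1 / 2) ^ (k + 1) := by
          rw [Finset.sum_const, Finset.card_range, nsmul_eq_mul, div_pow, one_pow]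
          field

lemma exists_isChainingNet_qlossClass [MeasurableSpace Z] (hτ : 0 < τ)
    (hV : ∀ s ≤ τ, V s ∈ unitaryGroup (Fin 4 × Fin m) ℂ)
    (ρ_measurable : ∀ p q, Measurable fun z ↦ ρ z p q)
    (hρ : ∀ z, (ρ z).PosSemidef ∧ (ρ z).trace = 1) (hC : 0 ≤ C)
    (O_measurable : ∀ p q, Measurable fun z ↦ O z p q) (hO : ∀ z, opNorm (O z) ≤ C) :
    ∃ net, IsChainingNet (qlossClass V τ O ρ) C (96 * (τ * (1 + Real.log τ))) net := by
  choose s s_subset s_card s_close using exists_finset_net_qlossClass hτ hV hρ hC hO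
  refine ⟨fun | 0 => {0} | k + 1 => s k, rfl, ?_, ?_, ?_⟩
  · rintro (_ | k)
    exacts [by simp, s_card k]
  · rintro (_ | k) g hg
    · obtain rfl := Finset.mem_singleton.mp hg
      exact measurable_zero
    · obtain ⟨U, -, rfl⟩ := s_subset k hg
      exact measurable_qloss ρ_measurable O_measurable
  · rintro (_ | k) f hf
    · obtain ⟨U, hU, rfl⟩ := hf
      exact ⟨0, Finset.mem_singleton_self 0, fun z ↦ by
        simpa using abs_qloss_le hV hU (hρ z) (hO z)⟩
    · exact s_close k f hf

theorem measure_exists_qlossClass_generalizationGap_gt_le [MeasurableSpace Z] {μ : Measure Z}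
    [IsProbabilityMeasure μ] {N : ℕ} (hN : 0 < N) (hτ : 0 < τ)
    (hV : ∀ s ≤ τ, V s ∈ unitaryGroup (Fin 4 × Fin m) ℂ)
    (ρ_measurable : ∀ p q, Measurable fun z ↦ ρ z p q)
    (hρ : ∀ z, (ρ z).PosSemidef ∧ (ρ z).trace = 1) (hC : 0 < C)
    (O_measurable : ∀ p q, Measurable fun z ↦ O z p q) (hO : ∀ z, opNorm (O z) ≤ C)
    {u : ℝ} (hu : 0 ≤ u) :
    (Measure.pi fun _ : Fin N ↦ μ) {S | ∃ f ∈ qlossClass V τ O ρ,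
        6 * C * √(2 * (96 * (τ * (1 + Real.log τ)) + u + 1) / N) < generalizationGap μ f S}
      ≤ ENNReal.ofReal (Real.exp (-u)) := by
  obtain ⟨net, hnet⟩ :=
    exists_isChainingNet_qlossClass hτ hV ρ_measurable hρ hC.le O_measurable hO
  refine hnet.measure_exists_generalizationGap_gt_le ?_ hN hC (by positivity) hu
  rintro _ ⟨U, -, rfl⟩
  exact measurable_qloss ρ_measurable O_measurable

end SingleArchitecture

lemma measure_exists_stratum_le {Ω : Type*} [MeasurableSpace Ω] {ν : Measure Ω} {G : ℕ → ℕ}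
    {E : ℕ → ℕ → Set Ω} {δ : ℝ} (hδ : 0 < δ)
    (hE : ∀ τ, 0 < τ → ∀ j < G τ,
      ν (E τ j) ≤ ENNReal.ofReal (Real.exp (-(Real.log (G τ) + Real.log (2 / δ) + τ)))) :
    ν {ω | ∃ τ, 0 < τ ∧ ∃ j < G τ, ω ∈ E τ j} ≤ ENNReal.ofReal δ := by
  have subset_iUnion : {ω | ∃ τ, 0 < τ ∧ ∃ j < G τ, ω ∈ E τ j}
      ⊆ ⋃ k, ⋃ j ∈ Finset.range (G (k + 1)), E (k + 1) j := by
    rintro ω ⟨_ | k, hτ, j, hj, hω⟩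
    exacts [absurd hτ (lt_irrefl 0),
      Set.mem_iUnion_of_mem k (Set.mem_biUnion (Finset.mem_range.mpr hj) hω)]
  refine (measure_mono subset_iUnion).trans
    (measure_iUnion_le_of_forall_le_half_pow hδ.le fun k ↦ ?_)
  have weight_le : G (k + 1) * Real.exp (-(Real.log (G (k + 1)) + Real.log (2 / δ) + (k + 1 : ℕ)))
      ≤ δ * (1 / 2) ^ (k + 1) := by
    rcases Nat.eq_zero_or_pos (G (k + 1)) with G_zero | G_pos
    · rw [G_zero, Nat.cast_zero, zero_mul]
      positivity
    · calc _ = δ / 2 * Real.exp (-(k + 1 : ℕ)) := by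
            rw [neg_add, neg_add, Real.exp_add, Real.exp_add, Real.exp_neg, Real.exp_neg,
              Real.exp_log (mod_cast G_pos), Real.exp_log (by positivity)]
            field
        _ ≤ δ * (1 / 2) ^ (k + 1) := by
            gcongr
            exacts [half_le_self hδ.le, exp_neg_natCast_le_half_pow _]
  calc ν (⋃ j ∈ Finset.range (G (k + 1)), E (k + 1) j)
      ≤ ∑ j ∈ Finset.range (G (k + 1)), ν (E (k + 1) j) := measure_biUnion_finset_le _ _
    _ ≤ ∑ _j ∈ Finset.range (G (k + 1)), ENNReal.ofReal
          (Real.exp (-(Real.log (G (k + 1)) + Real.log (2 / δ) + (k + 1 : ℕ)))) :=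
        Finset.sum_le_sum fun j hj ↦ hE _ k.succ_pos j (Finset.mem_range.mp hj)
    _ ≤ ENNReal.ofReal (δ * (1 / 2) ^ (k + 1)) := by
        rw [Finset.sum_const, Finset.card_range, nsmul_eq_mul,
          ← ENNReal.ofReal_natCast, ← ENNReal.ofReal_mul (by positivity)]
        exact ENNReal.ofReal_le_ofReal weight_le

lemma sqrt_add_le_sqrt_add_sqrt {a b : ℝ} (ha : 0 ≤ a) (hb : 0 ≤ b) : √(a + b) ≤ √a + √b := by
  simpa only [Real.sqrt_eq_rpow] using
    Real.rpow_add_le_add_rpow ha hb one_half_pos.le one_half_lt_one.le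

lemma sqrt_stratified_rate_le {N τ T g d : ℝ} (hN : 0 ≤ N) (one_le_τ : 1 ≤ τ) (τ_le : τ ≤ T)
    (hg : 0 ≤ g) (hd : 0 ≤ d) :
    √(2 * (96 * T + (g + d + τ) + 1) / N) ≤ 14 * (√(T / N) + √(g / N) + √(d / N)) := by
  have hT : 0 ≤ T := by linarith
  calc √(2 * (96 * T + (g + d + τ) + 1) / N)
      ≤ √(14 ^ 2 * (T / N + g / N + d / N)) := by
        rw [← add_div, ← add_div, ← mul_div_assoc]
        exact Real.sqrt_le_sqrt (div_le_div_of_nonneg_right (by linarith) hN)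
    _ = 14 * √(T / N + g / N + d / N) := by
        rw [Real.sqrt_mul (by positivity), Real.sqrt_sq (by positivity)]
    _ ≤ 14 * (√(T / N) + √(g / N) + √(d / N)) := by
        gcongr
        refine (sqrt_add_le_sqrt_add_sqrt (by positivity) (by positivity)).trans ?_
        gcongr
        exact sqrt_add_le_sqrt_add_sqrt (by positivity) (by positivity)

theorem variable_structure_qmlm_generalization_general {m N : ℕ} (hN : 0 < N) (G : ℕ → ℕ)
    (V : ℕ → ℕ → ℕ → Matrix (Fin 4 × Fin m) (Fin 4 × Fin m) ℂ)
    (hV : ∀ τ, 0 < τ → ∀ j < G τ, ∀ s ≤ τ, V τ j s ∈ unitaryGroup (Fin 4 × Fin m) ℂ)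
    {Z : Type*} [MeasurableSpace Z] (μ : Measure Z) [IsProbabilityMeasure μ]
    {O ρ : Z → Matrix (Fin 4 × Fin m) (Fin 4 × Fin m) ℂ}
    (ρ_measurable : ∀ p q, Measurable fun z ↦ ρ z p q)
    (hρ : ∀ z, (ρ z).PosSemidef ∧ (ρ z).trace = 1) {C : ℝ} (hC : 0 < C)
    (O_measurable : ∀ p q, Measurable fun z ↦ O z p q) (hO : ∀ z, opNorm (O z) ≤ C)
    {δ : ℝ} (hδ : 0 < δ) (δ_lt_one : δ < 1) :
    ENNReal.ofReal (1 - δ) ≤ (Measure.pi fun _ : Fin N ↦ μ) {S |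
      ∀ τ, 0 < τ → ∀ j < G τ, ∀ U : ℕ → Matrix (Fin 4) (Fin 4) ℂ,
        (∀ t < τ, U t ∈ unitaryGroup (Fin 4) ℂ) →
        (∫ z, qloss (V τ j) τ O ρ U z ∂μ) - (1 / N) * ∑ i, qloss (V τ j) τ O ρ U (S i)
          ≤ 84 * C * (√(τ * (1 + Real.log τ) / N) + √(Real.log (G τ) / N)
            + √(Real.log (2 / δ) / N))} := by
  have log_two_div_nonneg : 0 ≤ Real.log (2 / δ) :=
    Real.log_nonneg ((one_le_div hδ).mpr (by linarith))
  have bad_le := measure_exists_stratum_le (ν := Measure.pi fun _ : Fin N ↦ μ) hδ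
    fun τ hτ j hj ↦ measure_exists_qlossClass_generalizationGap_gt_le hN hτ (hV τ hτ j hj)
      ρ_measurable hρ hC O_measurable hO (u := Real.log (G τ) + Real.log (2 / δ) + τ)
      (by positivity)
  rw [ENNReal.ofReal_sub _ hδ.le, ENNReal.ofReal_one, tsub_le_iff_right,
    ← measure_univ (μ := Measure.pi fun _ : Fin N ↦ μ)]
  refine (measure_univ_le_add_compl _).trans (add_le_add_right ((measure_mono ?_).trans bad_le) _)
  simp only [Set.compl_ofPred, not_forall, not_le]
  rintro S ⟨τ, hτ, j, hj, U, hU, gap_gt⟩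
  have one_le_τ : (1 : ℝ) ≤ τ := mod_cast hτ
  have τ_le : (τ : ℝ) ≤ τ * (1 + Real.log τ) :=
    le_mul_of_one_le_right (by positivity) (by linarith [Real.log_nonneg one_le_τ])
  have rate_le := sqrt_stratified_rate_le N.cast_nonneg one_le_τ τ_le
    (Real.log_natCast_nonneg (G τ)) log_two_div_nonneg
  refine ⟨τ, hτ, j, hj, _, ⟨U, hU, rfl⟩, lt_of_le_of_lt ?_ gap_gt⟩
  linarith [mul_le_mul_of_nonneg_left rate_le (by positivity : 0 ≤ 6 * C)]

end VariableStructure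

/-- Generalization bound for variable-structure QMLMs: uniformly over all numbers `τ ≥ 1` of
trainable gates, over all `G τ` architectures with `τ` gates, and over all parameter settings,
the generalization error is bounded by
`c·C·(√(τ(1+log τ)/N) + √(log(G τ)/N) + √(log(2/δ)/N))`. -/
theorem variable_structure_qmlm_generalization :
    ∃ c : ℝ, 0 < c ∧
      ∀ (m N : ℕ), 0 < m → 0 < N →
      ∀ G : ℕ → ℕ,
      ∀ V : ℕ → ℕ → ℕ → Matrix (Fin 4 × Fin m) (Fin 4 × Fin m) ℂ,
        (∀ τ, 0 < τ → ∀ j < G τ, ∀ s ≤ τ, V τ j s ∈ Matrix.unitaryGroup (Fin 4 × Fin m) ℂ) →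
      ∀ (Z : Type) (_ : MeasurableSpace Z) (μ : Measure Z), IsProbabilityMeasure μ →
      ∀ ρ : Z → Matrix (Fin 4 × Fin m) (Fin 4 × Fin m) ℂ,
        (∀ p q, Measurable fun z => ρ z p q) →
        (∀ z, (ρ z).PosSemidef ∧ (ρ z).trace = 1) →
      ∀ C : ℝ, 0 < C →
      ∀ O : Z → Matrix (Fin 4 × Fin m) (Fin 4 × Fin m) ℂ,
        (∀ p q, Measurable fun z => O z p q) →
        (∀ z, (O z).IsHermitian ∧ opNorm (O z) ≤ C) →
      ∀ δ : ℝ, 0 < δ → δ < 1 →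
        ENNReal.ofReal (1 - δ) ≤
          (Measure.pi fun _ : Fin N => μ) {S |
            ∀ τ, 0 < τ → ∀ j < G τ,
            ∀ U : ℕ → Matrix (Fin 4) (Fin 4) ℂ,
              (∀ t < τ, U t ∈ Matrix.unitaryGroup (Fin 4) ℂ) →
            (∫ z, qloss (V τ j) τ O ρ U z ∂μ) - (1 / N) * ∑ i, qloss (V τ j) τ O ρ U (S i)
              ≤ c * C * (Real.sqrt (τ * (1 + Real.log τ) / N)
                  + Real.sqrt (Real.log (G τ) / N)
                  + Real.sqrt (Real.log (2 / δ) / N))} := by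
  refine ⟨84, by norm_num, fun m N _ hN G V hV Z _ μ _ ρ ρ_measurable hρ C hC O O_measurable hO
    δ hδ δ_lt_one ↦ ?_⟩
  exact variable_structure_qmlm_generalization_general hN G V hV μ ρ_measurable hρ hC
    O_measurable (fun z ↦ (hO z).2) hδ δ_lt_one
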